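/- Let W be a Coxeter group with reflection set T and let c be a Coxeter element of W. The set C_c of reduced T-words for c is a chain system on the alphabet T: word lengths are bounded (all words in C_c have length equal to the number of simple generators); whenever prefix classes and postfix classes admit one concatenation in C_c they admit all concatenations of representatives; and if p, x are prefix and postfix, t ∈ T a reflection, w a T-word, and both ptx and pwx lie in C_c, then w = t. -/

import Mathlib

/-!
Multiplicativity of the product and constancy of the length give the chain system axioms at once,
so the content is that every reduced `T`-word for `c` has length `n`, the number of simple
reflections. The upper bound is the defining expression of `c`. For the lower bound, `W` acts on a
space `V` by reflections whose roots `α_i`, and whose coroots `f_i`, are both linearly independent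
families. The usual geometric representation on `ℝ^B` fails here, because its bilinear form may be
degenerate; so `V = ℝ^B × ℝ^B`, with the second factor pairing perfectly against the coroots.

On `V`, the fixed space of a Coxeter element is the intersection of the kernels of the coroots
(`coroot_eq_zero_of_wordProd_fixed`, using independence of the roots), while a product of `k`
reflections fixes pointwise the intersection of the kernels of `k` functionals. If `k < n`, these
functionals have a common nonzero zero `(0, y)`, which is then fixed by `c`; but the value of `f_i`
there is `y i`, a contradiction (`card_le_length_of_prod_eq`).
-/

/-! Basic notions for chain systems on words over an alphabet. -/

namespace ChainSys

variable {A : Type*}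

/-- `p` is a prefix (initial segment) of some word of `C`. -/
def PreWord (C : Set (List A)) (p : List A) : Prop := ∃ x, p ++ x ∈ C

/-- `x` is a postfix (final segment) of some word of `C`. -/
def PostWord (C : Set (List A)) (x : List A) : Prop := ∃ p, p ++ x ∈ C

/-- Two prefixes of `C` are equivalent when some common postfix completes both into `C`. -/
def PreEquiv (C : Set (List A)) (p₁ p₂ : List A) : Prop :=
  ∃ x, p₁ ++ x ∈ C ∧ p₂ ++ x ∈ C

/-- Two postfixes of `C` are equivalent when some common prefix completes both into `C`. -/
def PostEquiv (C : Set (List A)) (x₁ x₂ : List A) : Prop :=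
  ∃ p, p ++ x₁ ∈ C ∧ p ++ x₂ ∈ C

/-- A chain system: (i) bounded word lengths; (ii) whether `p ++ x ∈ C` depends only on the
equivalence classes of the prefix `p` and the postfix `x`; (iii) unique single-letter
substitution. -/
def IsChainSystem (C : Set (List A)) : Prop :=
  (∃ N, ∀ w ∈ C, w.length ≤ N) ∧
  (∀ p₁ p₂ x₁ x₂, PreEquiv C p₁ p₂ → PostEquiv C x₁ x₂ → p₁ ++ x₁ ∈ C → p₂ ++ x₂ ∈ C) ∧
  (∀ (p : List A) (a : A) (w x : List A), p ++ [a] ++ x ∈ C → p ++ w ++ x ∈ C → w = [a])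

/-- The prefix order on (equivalence classes of) prefixes of `C`, at the level of
representatives: `P ≤ Q` iff some representative of `P` is an initial segment of some
representative of `Q`. -/
def LePre (C : Set (List A)) (p q : List A) : Prop :=
  ∃ p' q', PreEquiv C p p' ∧ PreEquiv C q q' ∧ p' <+: q'

/-- Cover relations of the prefix order, at the level of representatives. -/
def CoverPre (C : Set (List A)) (p q : List A) : Prop :=
  LePre C p q ∧ ¬ PreEquiv C p q ∧
    ∀ r, LePre C p r → LePre C r q → PreEquiv C r p ∨ PreEquiv C r q

end ChainSys

open ChainSys

/-- `c` is a Coxeter element: a product of the simple reflections, each appearing exactly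
once, in some order. -/
def IsCoxeterElement {B W : Type*} [Group W] {M : CoxeterMatrix B}
    (cs : CoxeterSystem M W) (c : W) : Prop :=
  ∃ l : List B, l.Nodup ∧ (∀ i : B, i ∈ l) ∧ c = cs.wordProd l

/-- A `T`-word: a finite sequence of reflections. -/
def IsTWord {B W : Type*} [Group W] {M : CoxeterMatrix B}
    (cs : CoxeterSystem M W) (l : List W) : Prop :=
  ∀ t ∈ l, cs.IsReflection t

/-- A reduced `T`-word for `w`: a `T`-word of minimal length whose product is `w`. -/
def IsReducedTWord {B W : Type*} [Group W] {M : CoxeterMatrix B}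
    (cs : CoxeterSystem M W) (w : W) (l : List W) : Prop :=
  IsTWord cs l ∧ l.prod = w ∧
    ∀ l' : List W, IsTWord cs l' → l'.prod = w → l.length ≤ l'.length

/-- The set `C_c` of reduced `T`-words for `c`. -/
def RedTWords {B W : Type*} [Group W] {M : CoxeterMatrix B}
    (cs : CoxeterSystem M W) (c : W) : Set (List W) :=
  {l | IsReducedTWord cs c l}

namespace CoxeterReflRep

open Polynomial Polynomial.Chebyshev Real

/-! ### Pairs of reflections and their orders -/

section Chebyshev

/-- The sine quotient formula for the Chebyshev polynomials, in the form used below. -/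
lemma S_eval_mul_sin (θ : ℝ) (k : ℤ) :
    (S ℝ k).eval (4 * cos (θ / 2) ^ 2 - 2) * sin θ = sin ((k + 1) * θ) := by
  rw [← S_two_mul_real_cos]
  congr 2
  have : cos θ = 2 * cos (θ / 2) ^ 2 - 1 := by rw [← cos_two_mul]; ring_nf
  rw [this]; ring

/-- Two reflections whose roots and coroots pair as for a dihedral group of order `2 * m`
compose to a transformation of order dividing `m`. -/
lemma reflection_mul_reflection_pow_eq_one {V : Type*} [AddCommGroup V] [Module ℝ V]
    {x y : V} {f g : Module.Dual ℝ V} (hf : f x = 2) (hg : g y = 2) (m : ℕ) (hm : 2 ≤ m)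
    (hfy : f y = -2 * cos (π / m)) (hgx : g x = -2 * cos (π / m)) :
    (Module.reflection hf * Module.reflection hg) ^ m = 1 := by
  -- For `m = 2` the sine in `S_eval_mul_sin` vanishes, and the reflections simply commute.
  obtain rfl | hm3 : m = 2 ∨ 3 ≤ m := by omega
  · have hfy0 : f y = 0 := by simp [hfy]
    have hgx0 : g x = 0 := by simp [hgx]
    ext z
    simp only [pow_two, LinearEquiv.mul_apply, Module.reflection_apply, map_sub, map_smul, hf, hg,
      hfy0, hgx0, LinearEquiv.coe_one, id_eq]
    module
  have hm0 : (0 : ℝ) < m := by positivity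
  have hsin : sin (2 * π / m) ≠ 0 := by
    apply (sin_pos_of_pos_of_lt_pi (by positivity) _).ne'
    rw [div_lt_iff₀ hm0]
    have : (3 : ℝ) ≤ m := by exact_mod_cast hm3
    nlinarith [pi_pos]
  have ht : 4 * cos (2 * π / m / 2) ^ 2 - 2 = f y * g x - 2 := by
    have : 2 * π / m / 2 = π / m := by ring
    rw [hfy, hgx, this]; ring
  have key := S_eval_mul_sin (2 * π / m)
  rw [ht] at key
  ext z
  rw [Module.reflection_mul_reflection_pow_apply hf hg m z]
  obtain ⟨k, rfl | rfl⟩ := Nat.even_or_odd' m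
  · have e1 : (((2 * k : ℕ) : ℤ) - 2) / 2 = k - 1 := by omega
    have e2 : (((2 * k : ℕ) : ℤ) - 1) / 2 = k - 1 := by omega
    have h0 : (S ℝ ((k : ℤ) - 1)).eval (f y * g x - 2) = 0 := by
      have := key (k - 1)
      have hang : (((k : ℤ) - 1 : ℤ) + 1 : ℝ) * (2 * π / (2 * k : ℕ)) = π := by
        push_cast at hm0 ⊢
        have : (k : ℝ) ≠ 0 := by rintro h; simp [h] at hm0
        field_simp
        ring
      rw [hang, sin_pi] at this
      exact (mul_eq_zero.mp this).resolve_right hsin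
    rw [e1, e2, h0]
    simp
  · have e1 : (((2 * k + 1 : ℕ) : ℤ) - 1) / 2 = k := by omega
    have e2 : (((2 * k + 1 : ℕ) : ℤ) - 3) / 2 = k - 1 := by omega
    have e3 : (((2 * k + 1 : ℕ) : ℤ)) / 2 = k := by omega
    have e4 : (((2 * k + 1 : ℕ) : ℤ) - 2) / 2 = k - 1 := by omega
    have h0 : (S ℝ (k : ℤ)).eval (f y * g x - 2)
        + (S ℝ ((k : ℤ) - 1)).eval (f y * g x - 2) = 0 := by
      have h1 := key k
      have h2 := key (k - 1)
      have hang : ((k : ℤ) + 1 : ℝ) * (2 * π / (2 * k + 1 : ℕ))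
          = 2 * π - (((k : ℤ) - 1 : ℤ) + 1 : ℝ) * (2 * π / (2 * k + 1 : ℕ)) := by
        push_cast
        have : (2 * k + 1 : ℝ) ≠ 0 := by positivity
        field_simp
        ring
      rw [hang, sin_two_pi_sub] at h1
      refine (mul_eq_zero.mp ?_).resolve_right hsin
      rw [add_mul, h1, h2]
      ring
    rw [e1, e2, e3, e4, h0]
    simp

end Chebyshev

/-! ### The extended geometric representation -/

variable {B W : Type*} [Group W] [Fintype B] {M : CoxeterMatrix B}

/-- The space of the extended geometric representation: the first factor is spanned by the roots,
the second one makes the coroots linearly independent. -/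
abbrev Space (B : Type*) : Type _ := (B → ℝ) × (B → ℝ)

/-- The simple coroot `f_i`: on the roots it is given by the matrix `-2 cos (π / m_ij)`. When
`m_ij = ∞`, encoded as `M i j = 0`, division by zero gives the customary value `-2`. -/
noncomputable def coroot (M : CoxeterMatrix B) (i : B) : Module.Dual ℝ (Space B) :=
  (∑ j, (-2 * cos (π / M i j)) • LinearMap.proj j) ∘ₗ LinearMap.fst ℝ _ _
    + LinearMap.proj i ∘ₗ LinearMap.snd ℝ _ _

lemma coroot_zero_left (i : B) (y : B → ℝ) : coroot M i (0, y) = y i := by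
  simp [coroot]

variable [DecidableEq B]

/-- The simple root `α_i`. -/
def root (i : B) : Space B := (Pi.single i 1, 0)

lemma coroot_root (i j : B) : coroot M i (root j) = -2 * cos (π / M i j) := by
  simp [coroot, root, Pi.single_apply]

lemma coroot_root_self (i : B) : coroot M i (root i) = 2 := by
  simp [coroot_root]

/-- The simple reflection of the representation. -/
noncomputable def refl (M : CoxeterMatrix B) (i : B) : Space B ≃ₗ[ℝ] Space B :=
  Module.reflection (coroot_root_self (M := M) i)

lemma refl_apply (i : B) (v : Space B) : refl M i v = v - coroot M i v • root i :=
  Module.reflection_apply _ _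

lemma refl_isLiftable : M.IsLiftable (refl M) := by
  intro i j
  rcases eq_or_ne i j with rfl | hij
  · rw [M.diagonal, pow_one]
    ext1 v
    exact Module.involutive_reflection (coroot_root_self i) v
  rcases Nat.eq_zero_or_pos (M i j) with h0 | hpos
  · rw [h0, pow_zero]
  have h1 := M.off_diagonal i j hij
  refine reflection_mul_reflection_pow_eq_one _ _ _ (by omega) (coroot_root i j) ?_
  rw [coroot_root, M.symmetric]

/-- The extended geometric representation of a Coxeter group. -/
noncomputable def rep (cs : CoxeterSystem M W) : W →* (Space B ≃ₗ[ℝ] Space B) :=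
  cs.lift ⟨refl M, refl_isLiftable⟩

lemma rep_simple (cs : CoxeterSystem M W) (i : B) (v : Space B) :
    rep cs (cs.simple i) v = v - coroot M i v • root i := by
  rw [rep, cs.lift_apply_simple, refl_apply]

/-! ### Fixed spaces -/

/-- Coordinates of the first factor outside a word are unchanged by the action of the word. -/
lemma rep_wordProd_fst_of_notMem (cs : CoxeterSystem M W) {i : B} {l : List B} (hi : i ∉ l)
    (v : Space B) : (rep cs (cs.wordProd l) v).1 i = v.1 i := by
  induction l with
  | nil => simp
  | cons j l ih =>
    rw [List.mem_cons, not_or] at hi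
    rw [cs.wordProd_cons, map_mul, LinearEquiv.mul_apply, rep_simple]
    simp [root, hi.1, ih hi.2]

/-- A vector fixed by a product of distinct simple reflections is fixed by each of them. -/
lemma coroot_eq_zero_of_wordProd_fixed (cs : CoxeterSystem M W) {l : List B} (hl : l.Nodup)
    {v : Space B} (hv : rep cs (cs.wordProd l) v = v) : ∀ i ∈ l, coroot M i v = 0 := by
  induction l with
  | nil => simp
  | cons j l ih =>
    rw [List.nodup_cons] at hl
    rw [cs.wordProd_cons, map_mul, LinearEquiv.mul_apply, rep_simple] at hv
    -- Only the first letter `j` can change the coordinate along `root j`.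
    have h0 : coroot M j (rep cs (cs.wordProd l) v) = 0 := by
      have := congrFun (congrArg Prod.fst hv) j
      simpa [root, rep_wordProd_fst_of_notMem cs hl.1] using this
    rw [h0, zero_smul, sub_zero] at hv
    rw [hv] at h0
    simpa [h0] using ih hl.2 hv

/-- A reflection fixes some hyperplane pointwise. -/
lemma exists_dual_of_isReflection (cs : CoxeterSystem M W) {t : W} (ht : cs.IsReflection t) :
    ∃ h : Module.Dual ℝ (Space B), ∀ v, h v = 0 → rep cs t v = v := by
  obtain ⟨w, i, rfl⟩ := ht
  refine ⟨coroot M i ∘ₗ (rep cs w⁻¹).toLinearMap, fun v hv => ?_⟩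
  have hv' : coroot M i (rep cs w⁻¹ v) = 0 := hv
  rw [map_mul, map_mul, LinearEquiv.mul_apply, LinearEquiv.mul_apply, rep_simple, hv', zero_smul,
    sub_zero, ← LinearEquiv.mul_apply, ← map_mul, mul_inv_cancel, map_one, LinearEquiv.coe_one,
    id_eq]

/-- A product of `k` reflections fixes pointwise the common kernel of some `k` functionals. -/
lemma exists_map_of_isTWord (cs : CoxeterSystem M W) {l : List W} (hl : IsTWord cs l) :
    ∃ h : Space B →ₗ[ℝ] (Fin l.length → ℝ), ∀ v, h v = 0 → rep cs l.prod v = v := by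
  have hl' (k : Fin l.length) : cs.IsReflection l[k] := hl _ (List.getElem_mem _)
  choose h hh using fun k => exists_dual_of_isReflection cs (hl' k)
  refine ⟨LinearMap.pi h, fun v hv => ?_⟩
  have hfix : ∀ t ∈ l, rep cs t v = v := by
    intro t ht
    obtain ⟨k, hk, rfl⟩ := List.getElem_of_mem ht
    exact hh ⟨k, hk⟩ v (congrFun hv ⟨k, hk⟩)
  clear hv hh h hl' hl
  induction l with
  | nil => simp
  | cons t l ih =>
    rw [List.prod_cons, map_mul, LinearEquiv.mul_apply,
      ih fun s hs => hfix s (List.mem_cons_of_mem _ hs)]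
    exact hfix t List.mem_cons_self

/-- A Coxeter element is not a product of fewer reflections than there are simple reflections. -/
lemma card_le_length_of_prod_eq (cs : CoxeterSystem M W) {c : W} (hc : IsCoxeterElement cs c)
    {l : List W} (hl : IsTWord cs l) (hprod : l.prod = c) : Fintype.card B ≤ l.length := by
  by_contra! hlt
  obtain ⟨h, hh⟩ := exists_map_of_isTWord cs hl
  have hker : LinearMap.ker (h ∘ₗ LinearMap.inr ℝ (B → ℝ) (B → ℝ)) ≠ ⊥ :=
    LinearMap.ker_ne_bot_of_finrank_lt (by simpa using hlt)
  obtain ⟨y, hy, hy0⟩ := (Submodule.ne_bot_iff _).mp hker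
  apply hy0
  obtain ⟨ω, hω, hmem, rfl⟩ := hc
  have hfix := hh (0, y) hy
  rw [hprod] at hfix
  funext i
  rw [← coroot_zero_left (M := M) i y]
  exact coroot_eq_zero_of_wordProd_fixed cs hω hfix i (hmem i)

end CoxeterReflRep

/-- The reduced `T`-words for a Coxeter element all have the length of its defining expression. -/
lemma length_eq_card_of_mem_redTWords {B W : Type*} [Group W] [Fintype B] {M : CoxeterMatrix B}
    (cs : CoxeterSystem M W) {c : W} (hc : IsCoxeterElement cs c) {l : List W}
    (hl : l ∈ RedTWords cs c) : l.length = Fintype.card B := by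
  classical
  obtain ⟨hT, hprod, hmin⟩ := hl
  refine le_antisymm ?_ (CoxeterReflRep.card_le_length_of_prod_eq cs hc hT hprod)
  obtain ⟨ω, hω, -, rfl⟩ := hc
  have hword : IsTWord cs (ω.map cs.simple) := by
    intro t ht
    obtain ⟨i, -, rfl⟩ := List.mem_map.mp ht
    exact cs.isReflection_simple i
  calc l.length ≤ (ω.map cs.simple).length := hmin _ hword rfl
    _ = ω.length := List.length_map _
    _ ≤ Fintype.card B := hω.length_le_card

/-- For a Coxeter element `c` of a Coxeter group `W`, the set of reduced
`T`-words for `c` is a chain system on the alphabet `T`; in particular all of its words have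
length equal to the number of simple generators. -/
theorem statement_10 {B W : Type*} [Group W] [Fintype B] {M : CoxeterMatrix B}
    (cs : CoxeterSystem M W) (c : W) (hc : IsCoxeterElement cs c) :
    (∀ l ∈ RedTWords cs c, l.length = Fintype.card B) ∧
    IsChainSystem (RedTWords cs c) := by
  have hlen : ∀ l ∈ RedTWords cs c, l.length = Fintype.card B :=
    fun l hl => length_eq_card_of_mem_redTWords cs hc hl
  refine ⟨hlen, ⟨_, fun w hw => (hlen w hw).le⟩, ?_, ?_⟩
  · rintro p₁ p₂ x₁ x₂ ⟨x, hx₁, hx₂⟩ ⟨p, hp₁, hp₂⟩ h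
    have hp : p₁.prod = p₂.prod := by
      have := hx₁.2.1.trans hx₂.2.1.symm
      simpa using this
    have hx : x₁.prod = x₂.prod := by
      have := hp₁.2.1.trans hp₂.2.1.symm
      simpa using this
    have l₁ := (hlen _ hx₁).trans (hlen _ hx₂).symm
    have l₂ := (hlen _ hp₁).trans (hlen _ hp₂).symm
    simp only [List.length_append] at l₁ l₂
    refine ⟨fun t ht => ?_, ?_, fun l' hT hprod => ?_⟩
    · rcases List.mem_append.mp ht with ht | ht
      · exact hx₂.1 t (List.mem_append_left _ ht)
      · exact hp₂.1 t (List.mem_append_right _ ht)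
    · rw [List.prod_append, ← hp, ← hx, ← List.prod_append]
      exact h.2.1
    · have := h.2.2 l' hT hprod
      simp only [List.length_append] at this ⊢
      omega
  · intro p a w x ha hw
    have hl := (hlen _ ha).trans (hlen _ hw).symm
    have hprod := ha.2.1.trans hw.2.1.symm
    simp only [List.length_append, List.length_singleton] at hl
    obtain ⟨b, rfl⟩ := List.length_eq_one_iff.mp (show w.length = 1 by omega)
    simp only [List.prod_append, List.prod_singleton, mul_left_inj, mul_right_inj] at hprod
    rw [hprod]
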